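/- (Theorem 2 of the paper.) Let λ0, λ1 ∈ ℝ with λ0 > 0, λ1 > 0, λ0 + λ1 = 1 and λ0 ≠ λ1, and ρ := Matrix.diagonal ![ (λ0 : ℂ), (λ1 : ℂ) ]. Let A1, A2 be Hermitian 2×2 complex matrices with trace 0 (the derivatives of the encoded state with respect to the two parameters), with SLDs L1, L2 relative to ρ, and QFIM F. Then the following are equivalent: (i) Tr[ρ * (L1 * L2 − L2 * L1)] = 0 and det F ≠ 0 (the quantum Cramér–Rao bound is achievable and its QFIM is invertible); (ii) ((A1 0 1) * star (A2 0 1)).im = 0 (the off-diagonal matrix elements ⟨e0|A1|e1⟩ and ⟨e0|A2|e1⟩ are real multiples of one another) and A1 * A2 ≠ A2 * A1. -/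

import Mathlib

open Matrix

/-- The symmetric logarithmic derivative of `A` relative to `ρ = diagonal ![λ0, λ1]`,
defined entrywise by `L μ ν = 2 ⬝ A μ ν / (λμ + λν)`. -/
noncomputable def sld (l0 l1 : ℝ) (A : Matrix (Fin 2) (Fin 2) ℂ) : Matrix (Fin 2) (Fin 2) ℂ :=
  Matrix.of fun μ ν => 2 * A μ ν / ((![l0, l1] μ + ![l0, l1] ν : ℝ) : ℂ)

/-- The quantum Fisher information matrix of the pair of parameter-derivatives `A1, A2`
at the state `ρ = diagonal ![λ0, λ1]`:
`F i j = Re ((1/2) · Tr[ρ (L_i L_j + L_j L_i)])` where `L_i` is the SLD of `A_i`. -/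
noncomputable def qfim (l0 l1 : ℝ) (A1 A2 : Matrix (Fin 2) (Fin 2) ℂ) :
    Matrix (Fin 2) (Fin 2) ℝ :=
  Matrix.of fun i j =>
    ((1 / 2 : ℂ) * Matrix.trace (Matrix.diagonal ![(l0 : ℂ), (l1 : ℂ)] *
      (![sld l0 l1 A1, sld l0 l1 A2] i * ![sld l0 l1 A1, sld l0 l1 A2] j
        + ![sld l0 l1 A1, sld l0 l1 A2] j * ![sld l0 l1 A1, sld l0 l1 A2] i))).re

/-!
Write `aᵢ` for the upper left entry of the traceless Hermitian matrix `Aᵢ` and `αᵢ` for its upper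
right entry. Then `Tr[ρ (L₁ L₂ - L₂ L₁)]` is a nonzero multiple of `Im (α₁ ᾱ₂)`, and a
Lagrange-type identity gives
`det F = 4 / (λ0 λ1) * |a₁ α₂ - a₂ α₁|² + (4 / (λ0 + λ1) * Im (α₁ ᾱ₂))²`.
Since `A₁` and `A₂` commute exactly when `Im (α₁ ᾱ₂)` and `a₁ α₂ - a₂ α₁` both vanish, an
achievable bound has an invertible QFIM exactly when `A₁` and `A₂` do not commute.
-/

section

variable {R : Type*} [CommRing R] {A B : Matrix (Fin 2) (Fin 2) R}

lemma apply_one_one_eq_neg_of_trace_eq_zero (hAtr : A.trace = 0) : A 1 1 = -A 0 0 :=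
  eq_neg_of_add_eq_zero_right (A.trace_fin_two ▸ hAtr)

lemma commute_fin_two_iff :
    Commute A B ↔ A 0 1 * B 1 0 = B 0 1 * A 1 0 ∧
      (A 0 0 - A 1 1) * B 0 1 = (B 0 0 - B 1 1) * A 0 1 ∧
      (A 0 0 - A 1 1) * B 1 0 = (B 0 0 - B 1 1) * A 1 0 := by
  simp only [commute_iff_eq, ← Matrix.ext_iff, Fin.forall_fin_two, mul_apply, Fin.sum_univ_two]
  constructor
  · rintro ⟨⟨h00, h01⟩, h10, -⟩
    exact ⟨by linear_combination h00, by linear_combination h01, by linear_combination -h10⟩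
  · rintro ⟨hoff, h01, h10⟩
    exact ⟨⟨by linear_combination hoff, by linear_combination h01⟩,
      by linear_combination -h10, by linear_combination -hoff⟩

variable [StarRing R]

lemma offDiag_mul_comm_iff_isSelfAdjoint (hA : A.IsHermitian) (hB : B.IsHermitian) :
    A 0 1 * B 1 0 = B 0 1 * A 1 0 ↔ IsSelfAdjoint (A 0 1 * star (B 0 1)) := by
  rw [isSelfAdjoint_iff, star_mul, star_star, hA.apply, hB.apply, eq_comm]

lemma commute_fin_two_iff_of_isHermitian (hA : A.IsHermitian) (hB : B.IsHermitian) :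
    Commute A B ↔ IsSelfAdjoint (A 0 1 * star (B 0 1)) ∧
      (A 0 0 - A 1 1) * B 0 1 = (B 0 0 - B 1 1) * A 0 1 := by
  have hconj : (A 0 0 - A 1 1) * B 1 0 = (B 0 0 - B 1 1) * A 1 0 ↔
      (A 0 0 - A 1 1) * B 0 1 = (B 0 0 - B 1 1) * A 0 1 := by
    rw [← star_inj]
    simp only [star_mul', star_sub, hA.apply, hB.apply]
  rw [commute_fin_two_iff, offDiag_mul_comm_iff_isSelfAdjoint hA hB, hconj, and_self]

lemma commute_fin_two_iff_of_isHermitian_of_trace_eq_zero [IsDomain R] [NeZero (2 : R)]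
    (hA : A.IsHermitian) (hB : B.IsHermitian) (hAtr : A.trace = 0) (hBtr : B.trace = 0) :
    Commute A B ↔ IsSelfAdjoint (A 0 1 * star (B 0 1)) ∧ A 0 0 * B 0 1 = B 0 0 * A 0 1 := by
  rw [commute_fin_two_iff_of_isHermitian hA hB, apply_one_one_eq_neg_of_trace_eq_zero hAtr,
    apply_one_one_eq_neg_of_trace_eq_zero hBtr, sub_neg_eq_add, sub_neg_eq_add, ← two_mul,
    ← two_mul, mul_assoc, mul_assoc, mul_right_inj' two_ne_zero]

end

section

variable {l0 l1 : ℝ} {A B : Matrix (Fin 2) (Fin 2) ℂ}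

lemma sld_eq (l0 l1 : ℝ) (A : Matrix (Fin 2) (Fin 2) ℂ) :
    sld l0 l1 A =
      !![A 0 0 / l0, 2 * A 0 1 / (l0 + l1); 2 * A 1 0 / (l0 + l1), A 1 1 / l1] := by
  ext i j
  fin_cases i <;> fin_cases j <;> simp [sld, ← two_mul, mul_div_mul_left, add_comm]

lemma trace_diagonal_mul_sld_commutator (l0 l1 : ℝ) (A B : Matrix (Fin 2) (Fin 2) ℂ) :
    (diagonal ![(l0 : ℂ), (l1 : ℂ)] *
      (sld l0 l1 A * sld l0 l1 B - sld l0 l1 B * sld l0 l1 A)).trace =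
      (l0 - l1) * (2 / (l0 + l1)) ^ 2 * (A 0 1 * B 1 0 - B 0 1 * A 1 0) := by
  rw [trace_fin_two, diagonal_mul, diagonal_mul]
  simp only [sld_eq, Matrix.sub_apply, mul_apply, Fin.sum_univ_two, of_apply,
    cons_val', cons_val_zero, cons_val_one, cons_val_fin_one]
  ring

lemma trace_diagonal_mul_sld_commutator_eq_zero_iff (hadd : l0 + l1 ≠ 0) (hne : l0 ≠ l1)
    (hA : A.IsHermitian) (hB : B.IsHermitian) :
    (diagonal ![(l0 : ℂ), (l1 : ℂ)] *
      (sld l0 l1 A * sld l0 l1 B - sld l0 l1 B * sld l0 l1 A)).trace = 0 ↔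
      (A 0 1 * star (B 0 1)).im = 0 := by
  have hadd' : (l0 + l1 : ℂ) ≠ 0 := mod_cast hadd
  have hsub : (l0 - l1 : ℂ) ≠ 0 := sub_ne_zero.2 (mod_cast hne)
  have hcoeff : (l0 - l1) * (2 / (l0 + l1)) ^ 2 ≠ (0 : ℂ) :=
    mul_ne_zero hsub (pow_ne_zero 2 (div_ne_zero two_ne_zero hadd'))
  rw [trace_diagonal_mul_sld_commutator, mul_eq_zero_iff_left hcoeff, sub_eq_zero,
    offDiag_mul_comm_iff_isSelfAdjoint hA hB, Complex.im_eq_zero_iff_isSelfAdjoint]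

lemma half_trace_diagonal_mul_sld_anticommutator (l0 l1 : ℝ) (A B : Matrix (Fin 2) (Fin 2) ℂ) :
    (1 / 2 : ℂ) * (diagonal ![(l0 : ℂ), (l1 : ℂ)] *
      (sld l0 l1 A * sld l0 l1 B + sld l0 l1 B * sld l0 l1 A)).trace =
      A 0 0 * B 0 0 / l0 + A 1 1 * B 1 1 / l1 +
        2 * (A 0 1 * B 1 0 + B 0 1 * A 1 0) / (l0 + l1) := by
  have mul_div_mul_div (l z w : ℂ) : l * (z / l * (w / l)) = z * w / l := by
    rcases eq_or_ne l 0 with rfl | hl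
    · simp
    · field_simp
  have h0 := mul_div_mul_div l0 (A 0 0) (B 0 0)
  have h1 := mul_div_mul_div l1 (A 1 1) (B 1 1)
  have h01 := mul_div_mul_div (l0 + l1) (A 0 1) (B 1 0)
  have h10 := mul_div_mul_div (l0 + l1) (B 0 1) (A 1 0)
  rw [trace_fin_two, diagonal_mul, diagonal_mul]
  simp only [sld_eq, Matrix.add_apply, mul_apply, Fin.sum_univ_two, of_apply,
    cons_val', cons_val_zero, cons_val_one, cons_val_fin_one]
  linear_combination h0 + h1 + 2 * h01 + 2 * h10

lemma re_half_trace_diagonal_mul_sld_anticommutator (l0 l1 : ℝ) (hA : A.IsHermitian)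
    (hB : B.IsHermitian) :
    ((1 / 2 : ℂ) * (diagonal ![(l0 : ℂ), (l1 : ℂ)] *
      (sld l0 l1 A * sld l0 l1 B + sld l0 l1 B * sld l0 l1 A)).trace).re =
      (A 0 0).re * (B 0 0).re / l0 + (A 1 1).re * (B 1 1).re / l1 +
        4 * (A 0 1 * star (B 0 1)).re / (l0 + l1) := by
  have hA00 : (A 0 0).im = 0 := Complex.conj_eq_iff_im.1 (hA.apply 0 0)
  have hA11 : (A 1 1).im = 0 := Complex.conj_eq_iff_im.1 (hA.apply 1 1)
  rw [half_trace_diagonal_mul_sld_anticommutator, ← hA.apply 1 0, ← hB.apply 1 0,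
    ← Complex.ofReal_add]
  simp only [RCLike.star_def, Complex.add_re, Complex.div_ofReal_re, Complex.mul_re, hA00, hA11,
    zero_mul, sub_zero, Complex.re_ofNat, Complex.im_ofNat, Complex.conj_re, Complex.conj_im]
  ring

lemma qfim_apply (l0 l1 : ℝ) {A : Fin 2 → Matrix (Fin 2) (Fin 2) ℂ}
    (hA : ∀ i, (A i).IsHermitian) (i j : Fin 2) :
    qfim l0 l1 (A 0) (A 1) i j =
      (A i 0 0).re * (A j 0 0).re / l0 + (A i 1 1).re * (A j 1 1).re / l1 +
        4 * (A i 0 1 * star (A j 0 1)).re / (l0 + l1) := by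
  have hpair : ![sld l0 l1 (A 0), sld l0 l1 (A 1)] = fun k => sld l0 l1 (A k) := by
    ext k : 1
    fin_cases k <;> rfl
  rw [qfim, of_apply, hpair, re_half_trace_diagonal_mul_sld_anticommutator l0 l1 (hA i) (hA j)]

lemma qfim_apply_of_trace_eq_zero (l0 l1 : ℝ) {A : Fin 2 → Matrix (Fin 2) (Fin 2) ℂ}
    (hA : ∀ i, (A i).IsHermitian) (hAtr : ∀ i, (A i).trace = 0) (i j : Fin 2) :
    qfim l0 l1 (A 0) (A 1) i j =
      (1 / l0 + 1 / l1) * ((A i 0 0).re * (A j 0 0).re) +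
        4 / (l0 + l1) * (A i 0 1 * star (A j 0 1)).re := by
  rw [qfim_apply l0 l1 hA, apply_one_one_eq_neg_of_trace_eq_zero (hAtr i),
    apply_one_one_eq_neg_of_trace_eq_zero (hAtr j), Complex.neg_re, Complex.neg_re]
  ring

lemma det_qfim (hl0 : l0 ≠ 0) (hl1 : l1 ≠ 0) (hadd : l0 + l1 ≠ 0) (hA : A.IsHermitian)
    (hB : B.IsHermitian) (hAtr : A.trace = 0) (hBtr : B.trace = 0) :
    (qfim l0 l1 A B).det =
      4 / (l0 * l1) * Complex.normSq (A 0 0 * B 0 1 - B 0 0 * A 0 1) +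
        (4 / (l0 + l1) * (A 0 1 * star (B 0 1)).im) ^ 2 := by
  have hA00 : (A 0 0).im = 0 := Complex.conj_eq_iff_im.1 (hA.apply 0 0)
  have hB00 : (B 0 0).im = 0 := Complex.conj_eq_iff_im.1 (hB.apply 0 0)
  have hentry := qfim_apply_of_trace_eq_zero l0 l1 (A := ![A, B])
    (Fin.forall_fin_two.2 ⟨hA, hB⟩) (Fin.forall_fin_two.2 ⟨hAtr, hBtr⟩)
  simp only [cons_val_zero, cons_val_one] at hentry
  have hcoeff : (1 / l0 + 1 / l1) * (4 / (l0 + l1)) = 4 / (l0 * l1) := by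
    field_simp
    ring
  rw [det_fin_two, ← hcoeff]
  simp only [hentry, cons_val_zero, cons_val_one, cons_val_fin_one, RCLike.star_def,
    Complex.normSq_apply, Complex.sub_re, Complex.sub_im, Complex.mul_re, Complex.mul_im,
    Complex.conj_re, Complex.conj_im, hA00, hB00]
  ring

lemma det_qfim_eq_zero_iff_commute (hl0 : l0 ≠ 0) (hl1 : l1 ≠ 0) (hadd : l0 + l1 ≠ 0)
    (hA : A.IsHermitian) (hB : B.IsHermitian) (hAtr : A.trace = 0) (hBtr : B.trace = 0)
    (him : (A 0 1 * star (B 0 1)).im = 0) :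
    (qfim l0 l1 A B).det = 0 ↔ Commute A B := by
  have hcoeff : 4 / (l0 * l1) ≠ 0 := div_ne_zero four_ne_zero (mul_ne_zero hl0 hl1)
  rw [det_qfim hl0 hl1 hadd hA hB hAtr hBtr, him, mul_zero, zero_pow two_ne_zero, add_zero,
    mul_eq_zero_iff_left hcoeff, Complex.normSq_eq_zero, sub_eq_zero,
    commute_fin_two_iff_of_isHermitian_of_trace_eq_zero hA hB hAtr hBtr,
    and_iff_right (Complex.im_eq_zero_iff_isSelfAdjoint _ |>.1 him)]

end

theorem stmt_10_general {l0 l1 : ℝ} (hl0 : l0 ≠ 0) (hl1 : l1 ≠ 0) (hadd : l0 + l1 ≠ 0)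
    (hne : l0 ≠ l1) {A1 A2 : Matrix (Fin 2) (Fin 2) ℂ}
    (hA1 : A1.IsHermitian) (hA2 : A2.IsHermitian) (hA1tr : A1.trace = 0) (hA2tr : A2.trace = 0) :
    ((diagonal ![(l0 : ℂ), (l1 : ℂ)] *
        (sld l0 l1 A1 * sld l0 l1 A2 - sld l0 l1 A2 * sld l0 l1 A1)).trace = 0 ∧
      (qfim l0 l1 A1 A2).det ≠ 0) ↔
      ((A1 0 1 * star (A2 0 1)).im = 0 ∧ A1 * A2 ≠ A2 * A1) := by
  rw [trace_diagonal_mul_sld_commutator_eq_zero_iff hadd hne hA1 hA2]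
  exact and_congr_right fun him =>
    (det_qfim_eq_zero_iff_commute hl0 hl1 hadd hA1 hA2 hA1tr hA2tr him).not

/-- Theorem 2 of the paper: for two-parameter estimation with qubit probes, the QFIM
associated with an achievable quantum Cramér–Rao bound is invertible iff the off-diagonal
elements of the parameter-derivatives are real multiples of one another and the
derivatives do not commute. -/
theorem stmt_10 (l0 l1 : ℝ) (hl0 : 0 < l0) (hl1 : 0 < l1) (hsum : l0 + l1 = 1)
    (hne : l0 ≠ l1)
    (ρ : Matrix (Fin 2) (Fin 2) ℂ) (hρ : ρ = Matrix.diagonal ![(l0 : ℂ), (l1 : ℂ)])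
    (A1 A2 : Matrix (Fin 2) (Fin 2) ℂ)
    (hA1 : A1.IsHermitian) (hA2 : A2.IsHermitian)
    (hA1tr : A1.trace = 0) (hA2tr : A2.trace = 0)
    (L1 L2 : Matrix (Fin 2) (Fin 2) ℂ) (hL1 : L1 = sld l0 l1 A1) (hL2 : L2 = sld l0 l1 A2) :
    (Matrix.trace (ρ * (L1 * L2 - L2 * L1)) = 0 ∧ (qfim l0 l1 A1 A2).det ≠ 0) ↔
      ((A1 0 1 * star (A2 0 1)).im = 0 ∧ A1 * A2 ≠ A2 * A1) := by
  subst hρ hL1 hL2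
  exact stmt_10_general hl0.ne' hl1.ne' (add_pos hl0 hl1).ne' hne hA1 hA2 hA1tr hA2tr
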